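/- Let m ≥ 2 be a fixed integer and c = 1. There exist a constant K = K(m) and s0 = s0(m) such that for all s ≥ s0, with n = ms + 1 and ℓ = s − 1: if F ⊆ 2^{[n]} is a shifted family with ν(F) < s, F ⊄ Q(m,s,ℓ), and F ⊄ W(m,s,ℓ), then y_F(m) + y_F(m+1) ≥ 4·C(n, m−1) − K·s^{m−2}. -/

import Mathlib

/-!
Write `n = ms + 1`, `U = {1, …, m-1}`, `X = {m, …, 2m-2}`.

Non-membership propagates upwards in the shifting order, so a single missing set forces many
missing ones. For `X` consisting of boundedly small elements:

* if `X ∪ {n-j} ∉ F` with `|X| = m-1`, then all sets consisting of one of the last `j + 1` elements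
  and `m-1` elements between `X` and `n-j` are missing: `(j+1)·C(n, m-1) - O(s^{m-2})` sets;
* if `X ∪ {n-1, n} ∉ F` with `|X| = m-1`, then `C(n, m-1) - O(s^{m-2})` sets of size `m+1` are
  missing.

Suppose the claimed bound fails. The interval `{p, …, n-3}`, when its length is `mr`, is partitioned
into the blocks `B_i`, `i < r`, where `B_i` has the single large element `n-3-i` and the `i`-th group
of `m-1` consecutive elements counted from `p`. All blocks lie in `F`: a missing `B_i` would force
`(i+4)·C(n - O(mi), m-1)` missing sets for `mi ≤ s`, and all `m`-subsets of the last `i+4` elements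
for `mi > s`; both are too many. Hence `F` cannot contain sets `U ∪ E` and `X ∪ E'` with
`E, E'` disjoint subsets of `{n-2, n-1, n}`, since together with the blocks on `{2m-1, …, n-3}` they
would form an `s`-matching, nor a set contained in `{1, …, m-2} ∪ {n-2, n-1, n}`.

Shifting a member of `F` outside `Q` gives `U ∈ F` or `U ∪ {n-2} ∈ F`, so `X ∪ {n-1, n} ∉ F`.
Shifting a member outside `W` gives `U`, `U ∪ {n-1}` or `U ∪ {n-1, n}` in `F`, so
`X ∪ {n-2} ∉ F`. The latter accounts for `3·C(n, m-1)` missing `m`-sets and the former for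
`C(n, m-1)` missing `(m+1)`-sets, up to `O(s^{m-2})`, which is the claimed bound.
-/

open Finset

/-- The ground set `[n] = {1, …, n}`. -/
def ground (n : ℕ) : Finset ℕ := Finset.Icc 1 n

/-- `F` contains a matching of size `s`: `s` pairwise disjoint member sets. -/
def HasMatching (F : Finset (Finset ℕ)) (s : ℕ) : Prop :=
  ∃ M ⊆ F, M.card = s ∧ (M : Set (Finset ℕ)).PairwiseDisjoint id

/-- `A = (a₁ < … < a_k)` can be shifted to `B = (b₁ < … < b_k)`: same size and `bᵢ ≤ aᵢ`. -/
def CanShiftTo (A B : Finset ℕ) : Prop :=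
  ∃ h : B.card = A.card, ∀ i : Fin A.card,
    B.orderEmbOfFin h i ≤ A.orderEmbOfFin (rfl : A.card = A.card) i

/-- A family of subsets of the positive integers is shifted. -/
def IsShifted (F : Finset (Finset ℕ)) : Prop :=
  ∀ A ∈ F, ∀ B : Finset ℕ, 0 ∉ B → CanShiftTo A B → B ∈ F

/-- `Q(m,s,ℓ) = {P ⊆ [ms+c] : |P| + |P ∩ [ms−c−1]| ≥ 2m}` where `ℓ = s − c`. -/
def Qfam (m s c : ℕ) : Finset (Finset ℕ) :=
  (ground (m * s + c)).powerset.filter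
    (fun P => 2 * m ≤ P.card + (P ∩ ground (m * s - c - 1)).card)

/-- `W(m,s,ℓ) = {P ⊆ [ms+c] : |P ∩ [ms−1]| ≥ m}`. -/
def Wfam (m s c : ℕ) : Finset (Finset ℕ) :=
  (ground (m * s + c)).powerset.filter
    (fun P => m ≤ (P ∩ ground (m * s - 1)).card)

/-- `P(m,s,ℓ) = {P ⊆ [ms+c] : |P| + |P ∩ [ℓ−1]| ≥ m+1}` where `ℓ = s − c`. -/
def Pfam (m s c : ℕ) : Finset (Finset ℕ) :=
  (ground (m * s + c)).powerset.filter
    (fun P => m + 1 ≤ P.card + (P ∩ ground (s - c - 1)).card)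

/-- `P'(m,s,ℓ) = ⋃_{i=m+1}^n ([n] choose i) ∪ ([mℓ−1] choose m)` where `ℓ = s − c`. -/
def P'fam (m s c : ℕ) : Finset (Finset ℕ) :=
  (ground (m * s + c)).powerset.filter
    (fun P => m + 1 ≤ P.card ∨ (P.card = m ∧ P ⊆ ground (m * (s - c) - 1)))

/-- The deletion number `d(F)`: the least size of a set `X ⊆ [n]` whose removal kills
all `ℓ`-matchings in the `m`-th layer of `F`. -/
noncomputable def delNum (n m ℓ : ℕ) (F : Finset (Finset ℕ)) : ℕ :=
  sInf {d : ℕ | ∃ X ⊆ ground n, X.card = d ∧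
    ¬ HasMatching (F.filter (fun A => A.card = m ∧ A ⊆ ground n \ X)) ℓ}

/-- `y_F(i)`: the number of `i`-element subsets of `[n]` not in `F`. -/
def yF (n : ℕ) (F : Finset (Finset ℕ)) (i : ℕ) : ℕ :=
  (((ground n).powerset.filter (fun A => A.card = i)) \ F).card

/-! ### The shifting order -/

/-- `Below B A` : every initial segment contains at least as many elements of `B` as of `A`. For
sets of equal size this is the shifting order, in a form that is additive over disjoint unions. -/
def Below (B A : Finset ℕ) : Prop :=
  ∀ x, (A.filter (· ≤ x)).card ≤ (B.filter (· ≤ x)).card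

lemma Below.canShiftTo {A B : Finset ℕ} (h : Below B A) (hc : B.card = A.card) :
    CanShiftTo A B := by
  refine ⟨hc, fun i => ?_⟩
  by_contra! hlt
  set x := A.orderEmbOfFin rfl i with hx
  have h1 : (i : ℕ) + 1 ≤ (A.filter (· ≤ x)).card := by
    have : ((Finset.Iic i).map (A.orderEmbOfFin rfl).toEmbedding) ⊆ A.filter (· ≤ x) := by
      intro y hy
      simp only [Finset.mem_map, Finset.mem_Iic] at hy
      obtain ⟨j, hj, rfl⟩ := hy
      simp only [Finset.mem_filter]
      exact ⟨Finset.orderEmbOfFin_mem _ _ _, (A.orderEmbOfFin rfl).monotone hj⟩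
    have h2 := Finset.card_le_card this
    rw [Finset.card_map, Fin.card_Iic] at h2
    exact h2
  have h3 : (B.filter (· ≤ x)).card ≤ i := by
    have : B.filter (· ≤ x) ⊆ ((Finset.Iio i).map (B.orderEmbOfFin hc).toEmbedding) := by
      intro y hy
      simp only [Finset.mem_filter] at hy
      have hy2 : y ∈ Set.range (B.orderEmbOfFin hc) := by
        rw [Finset.range_orderEmbOfFin]; exact hy.1
      obtain ⟨j, rfl⟩ := hy2
      simp only [Finset.mem_map, Finset.mem_Iio]
      refine ⟨j, ?_, rfl⟩
      exact (B.orderEmbOfFin hc).lt_iff_lt.1 (lt_of_le_of_lt hy.2 hlt)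
    have h2 := Finset.card_le_card this
    rw [Finset.card_map, Fin.card_Iio] at h2
    exact h2
  have := h x
  omega

lemma Below.refl (A : Finset ℕ) : Below A A := fun _ => le_rfl

lemma Below.union {A B A' B' : Finset ℕ} (h : Below B A) (h' : Below B' A')
    (hB : Disjoint B B') : Below (B ∪ B') (A ∪ A') := by
  intro x
  rw [Finset.filter_union, Finset.filter_union,
    Finset.card_union_of_disjoint (Finset.disjoint_filter_filter hB)]
  exact (Finset.card_union_le _ _).trans (add_le_add (h x) (h' x))

lemma below_of_le {A B : Finset ℕ} (hc : A.card ≤ B.card) (h : ∀ b ∈ B, ∀ a ∈ A, b ≤ a) :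
    Below B A := by
  intro x
  by_cases hx : ∃ a ∈ A, a ≤ x
  · obtain ⟨a, ha, hax⟩ := hx
    rw [Finset.filter_true_of_mem (s := B) (fun b hb => (h b hb a ha).trans hax)]
    exact (Finset.card_filter_le _ _).trans hc
  · push Not at hx
    rw [Finset.filter_false_of_mem (fun a ha => not_le.2 (hx a ha))]
    simp

lemma below_Icc {A : Finset ℕ} (h0 : 0 ∉ A) : Below (Finset.Icc 1 A.card) A := by
  intro x
  have h1 : (Finset.Icc 1 A.card).filter (· ≤ x) = Finset.Icc 1 (min A.card x) := by
    ext y; simp; omega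
  rw [h1, Nat.card_Icc, Nat.add_sub_cancel]
  refine le_min (Finset.card_filter_le _ _) ?_
  have : A.filter (· ≤ x) ⊆ Finset.Icc 1 x := by
    intro y hy
    simp only [Finset.mem_filter] at hy
    have : y ≠ 0 := fun h => h0 (h ▸ hy.1)
    simp; omega
  simpa using Finset.card_le_card this

lemma IsShifted.mem {F : Finset (Finset ℕ)} (hF : IsShifted F) {A B : Finset ℕ} (hA : A ∈ F)
    (h0 : 0 ∉ B) (hc : B.card = A.card) (h : Below B A) : B ∈ F :=
  hF A hA B h0 (h.canShiftTo hc)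

/-- A member of a shifted family can be pushed down to an initial segment while a prescribed part
`E` is replaced by a lower `E'`. -/
lemma IsShifted.mem_init {F : Finset (Finset ℕ)} (hF : IsShifted F) {A E E' : Finset ℕ} {k : ℕ}
    (hA : A ∈ F) (h0 : 0 ∉ A) (hE : E ⊆ A) (hEE : Below E' E) (hc : E'.card = E.card)
    (hk : A.card = k + E.card) (hE' : ∀ e ∈ E', k < e) : Finset.Icc 1 k ∪ E' ∈ F := by
  have hd : Disjoint (Finset.Icc 1 k) E' := by
    rw [Finset.disjoint_left]; intro a ha hb
    have := hE' a hb
    simp at ha; omega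
  have hcard : (A \ E).card = k := by
    rw [Finset.card_sdiff_of_subset hE]; omega
  refine hF.mem hA ?_ ?_ ?_
  · intro h
    rcases Finset.mem_union.1 h with h | h
    · simp at h
    · have := hE' _ h
      omega
  · rw [Finset.card_union_of_disjoint hd, hc, hk]; simp
  · have := (below_Icc (A := A \ E) (fun h => h0 (Finset.mem_sdiff.1 h).1))
    rw [hcard] at this
    have h2 := this.union hEE hd
    rwa [Finset.sdiff_union_of_subset hE] at h2

/-! ### One missing set forces many -/

/-- If `X ∪ {e}` is missing, with `X ⊆ [w]` and `w < e`, then so is every set with one element in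
`[e, n]` and the others strictly between `w` and `e`. -/
lemma yF_ge_single {n k w e : ℕ} {F : Finset (Finset ℕ)} (hF : IsShifted F) {X : Finset ℕ}
    (hX : ∀ x ∈ X, 1 ≤ x ∧ x ≤ w) (hXc : X.card = k + 1) (hwe : w < e)
    (hm : X ∪ {e} ∉ F) : (n + 1 - e) * (e - 1 - w).choose (k + 1) ≤ yF n F (k + 2) := by
  have hcard : ((Finset.Icc e n) ×ˢ (Finset.powersetCard (k + 1) (Finset.Ioo w e))).card
      = (n + 1 - e) * (e - 1 - w).choose (k + 1) := by
    rw [Finset.card_product, Finset.card_powersetCard]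
    simp only [Nat.card_Icc, Nat.card_Ioo]
    congr 2; omega
  rw [← hcard]
  unfold yF
  have hXe : Disjoint X {e} := by
    simp only [Finset.disjoint_singleton_right]
    intro h; have := hX e h; omega
  refine Finset.card_le_card_of_injOn (fun q => q.2 ∪ {q.1}) ?_ ?_
  · rintro ⟨z, Y⟩ hq
    simp only [Finset.coe_product, Set.mem_prod, Finset.mem_coe, Finset.mem_Icc,
      Finset.mem_powersetCard] at hq
    obtain ⟨⟨hz1, hz2⟩, hY, hYc⟩ := hq
    have hY' : ∀ y ∈ Y, w < y ∧ y < e := fun y hy => by simpa using hY hy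
    have hYz : Disjoint Y {z} := by
      simp only [Finset.disjoint_singleton_right]
      intro h; have := hY' z h; omega
    simp only [Finset.coe_sdiff, Set.mem_sdiff, Finset.mem_coe, Finset.mem_filter,
      Finset.mem_powerset]
    refine ⟨⟨?_, ?_⟩, ?_⟩
    · intro y hy
      simp only [Finset.mem_union, Finset.mem_singleton] at hy
      simp only [ground, Finset.mem_Icc]
      rcases hy with hy | rfl
      · have := hY' y hy; omega
      · omega
    · rw [Finset.card_union_of_disjoint hYz, hYc]; simp
    · intro hmem
      refine hm (hF.mem hmem ?_ ?_ ?_)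
      · simp only [Finset.mem_union, Finset.mem_singleton]
        rintro (h | h)
        · have := hX 0 h; omega
        · omega
      · rw [Finset.card_union_of_disjoint hYz, Finset.card_union_of_disjoint hXe, hYc, hXc]; simp
      · refine Below.union (below_of_le (by omega) ?_) (below_of_le (by simp) ?_) hXe
        · intro b hb a ha
          have := hX b hb
          have := hY' a ha
          omega
        · simpa using hz1
  · rintro ⟨z, Y⟩ hq ⟨z', Y'⟩ hq' heq
    simp only [Finset.coe_product, Set.mem_prod, Finset.mem_coe, Finset.mem_Icc,
      Finset.mem_powersetCard] at hq hq'
    obtain ⟨⟨hz1, hz2⟩, hY, hYc⟩ := hq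
    obtain ⟨⟨hz1', hz2'⟩, hY', hYc'⟩ := hq'
    simp only at heq
    have key : ∀ x, (x ∈ Y ∨ x = z) ↔ (x ∈ Y' ∨ x = z') := by
      intro x
      have := Finset.ext_iff.1 heq x
      simpa only [Finset.mem_union, Finset.mem_singleton] using this
    have b1 : ∀ y ∈ Y, y < e := fun y hy => (Finset.mem_Ioo.1 (hY hy)).2
    have b2 : ∀ y ∈ Y', y < e := fun y hy => (Finset.mem_Ioo.1 (hY' hy)).2
    have hzz : z = z' := by
      rcases (key z).1 (Or.inr rfl) with h | h
      · have := b2 z h; omega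
      · exact h
    subst hzz
    have : Y = Y' := by
      ext x
      constructor
      · intro h
        rcases (key x).1 (Or.inl h) with h' | h'
        · exact h'
        · have := b1 x h; omega
      · intro h
        rcases (key x).2 (Or.inl h) with h' | h'
        · exact h'
        · have := b2 x h; omega
    rw [this]

/-- If `X ∪ {n-1, n}` is missing with `X ⊆ [w]`, then so is every set formed by `n-1`, `n` and
elements strictly between `w` and `n-2`. -/
lemma yF_ge_pair {n k w : ℕ} {F : Finset (Finset ℕ)} (hF : IsShifted F) {X : Finset ℕ}
    (hX : ∀ x ∈ X, 1 ≤ x ∧ x ≤ w) (hXc : X.card = k + 1) (hw : w + 2 < n)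
    (hm : X ∪ {n - 1, n} ∉ F) : (n - 2 - 1 - w).choose (k + 1) ≤ yF n F (k + 3) := by
  have hcard : (Finset.powersetCard (k + 1) (Finset.Ioo w (n - 2))).card
      = (n - 2 - 1 - w).choose (k + 1) := by
    rw [Finset.card_powersetCard]
    simp only [Nat.card_Ioo]
    congr 1; omega
  rw [← hcard]
  unfold yF
  have hXe : Disjoint X {n - 1, n} := by
    rw [Finset.disjoint_left]
    intro x hx hx'
    have := hX x hx
    simp at hx'; omega
  have hpair : ({n - 1, n} : Finset ℕ).card = 2 := Finset.card_pair (by omega)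
  have hdis : ∀ Y ∈ Finset.powersetCard (k + 1) (Finset.Ioo w (n - 2)),
      Disjoint Y {n - 1, n} := by
    intro Y hY
    rw [Finset.mem_powersetCard] at hY
    rw [Finset.disjoint_left]
    intro x hx hx'
    have := Finset.mem_Ioo.1 (hY.1 hx)
    simp at hx'; omega
  refine Finset.card_le_card_of_injOn (fun Y => Y ∪ {n - 1, n}) ?_ ?_
  · intro Y hY0
    have hYz := hdis Y hY0
    simp only [Finset.mem_coe, Finset.mem_powersetCard] at hY0
    obtain ⟨hY, hYc⟩ := hY0
    have hY' : ∀ y ∈ Y, w < y ∧ y < n - 2 := fun y hy => by simpa using hY hy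
    simp only [Finset.coe_sdiff, Set.mem_sdiff, Finset.mem_coe, Finset.mem_filter,
      Finset.mem_powerset]
    refine ⟨⟨?_, ?_⟩, ?_⟩
    · intro y hy
      simp only [Finset.mem_union, Finset.mem_singleton, Finset.mem_insert] at hy
      simp only [ground, Finset.mem_Icc]
      rcases hy with hy | hy
      · have := hY' y hy; omega
      · omega
    · rw [Finset.card_union_of_disjoint hYz, hYc, hpair]
    · intro hmem
      refine hm (hF.mem hmem ?_ ?_ ?_)
      · simp only [Finset.mem_union, Finset.mem_singleton, Finset.mem_insert]
        rintro (h | h)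
        · have := hX 0 h; omega
        · omega
      · rw [Finset.card_union_of_disjoint hYz, Finset.card_union_of_disjoint hXe, hYc, hXc]
      · refine Below.union (below_of_le (by omega) ?_) (Below.refl _) hXe
        intro b hb a ha
        have := hX b hb
        have := hY' a ha
        omega
  · intro Y hY Y' hY' heq
    have h1 := hdis Y hY
    have h2 := hdis Y' hY'
    simp only at heq
    rw [← Finset.union_sdiff_cancel_right h1, heq, Finset.union_sdiff_cancel_right h2]

lemma yF_ge_top {n k e : ℕ} {F : Finset (Finset ℕ)} (hF : IsShifted F) {B : Finset ℕ}
    (hB : ∀ x ∈ B, 1 ≤ x ∧ x ≤ e) (hBc : B.card = k) (he : 1 ≤ e)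
    (hm : B ∉ F) : (n + 1 - e).choose k ≤ yF n F k := by
  have hcard : (Finset.powersetCard k (Finset.Icc e n)).card = (n + 1 - e).choose k := by
    rw [Finset.card_powersetCard, Nat.card_Icc]
  rw [← hcard]
  unfold yF
  refine Finset.card_le_card ?_
  intro Y hY
  rw [Finset.mem_powersetCard] at hY
  simp only [Finset.mem_sdiff, Finset.mem_filter, Finset.mem_powerset]
  have hY' : ∀ y ∈ Y, e ≤ y ∧ y ≤ n := fun y hy => by simpa using hY.1 hy
  refine ⟨⟨?_, hY.2⟩, ?_⟩
  · intro y hy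
    have := hY' y hy
    simp only [ground, Finset.mem_Icc]; omega
  · intro hmem
    refine hm (hF.mem hmem ?_ (by omega) (below_of_le (by omega) ?_))
    · intro h; have := hB 0 h; omega
    · intro b hb a ha
      exact (hB b hb).2.trans (hY' a ha).1

/-! ### Binomial estimates -/

lemma choose_sub_ge (n d k : ℕ) :
    n.choose (k + 1) ≤ (n - d).choose (k + 1) + d * n.choose k := by
  induction d with
  | zero => simp
  | succ d ih =>
    have h1 : (n - d).choose (k + 1) ≤ (n - (d + 1)).choose (k + 1) + n.choose k := by
      rcases Nat.eq_zero_or_pos (n - d) with h | h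
      · simp [h]
      · obtain ⟨t, ht⟩ : ∃ t, n - d = t + 1 := ⟨n - d - 1, by omega⟩
        have h2 : n - (d + 1) = t := by omega
        rw [ht, h2, Nat.choose_succ_succ']
        have : t.choose k ≤ n.choose k := Nat.choose_le_choose k (by omega)
        omega
    calc _ ≤ _ := ih
      _ ≤ _ := by rw [add_mul, one_mul]; omega

/-- The elementary inequality behind the blocks with `mi ≤ s`: the factor `i + 4` outweighs the
loss of `mi + c` elements of the ground set, so that the loss does not depend on `i`. -/
lemma choose_block {n m c i k : ℕ}
    (hn : (k + 1) * (m * i + c + 4 * m) + k ≤ n) :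
    4 * n.choose (k + 1) ≤ (i + 4) * (n - (m * i + c)).choose (k + 1) + 4 * c * n.choose k := by
  have h1 := choose_sub_ge n (m * i + c) k
  have h2 : (m * i + c + 4 * m) * n.choose k ≤ n.choose (k + 1) := by
    have h3 := Nat.choose_succ_right_eq n k
    have h4 : n.choose k * ((k + 1) * (m * i + c + 4 * m)) ≤ n.choose k * (n - k) :=
      Nat.mul_le_mul_left _ (by omega)
    rw [← h3] at h4
    have h5 : (m * i + c + 4 * m) * n.choose k * (k + 1) ≤ n.choose (k + 1) * (k + 1) := by
      calc _ = n.choose k * ((k + 1) * (m * i + c + 4 * m)) := by ring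
        _ ≤ _ := h4
    exact Nat.le_of_mul_le_mul_right h5 (Nat.succ_pos k)
  have h6 := Nat.mul_le_mul_left (i + 4) h1
  have h7 := Nat.mul_le_mul_left i h2
  generalize n.choose (k + 1) = a at *
  generalize (n - (m * i + c)).choose (k + 1) = b at *
  generalize n.choose k = e at *
  nlinarith

/-- A constant `T` such that `4·C(n, m-1) ≤ C(q, m)` once `q ≥ T` and `n ≤ (m²+1)q`, for
`m = k + 2`. -/
def bigT (k : ℕ) : ℕ :=
  2 * (k + 2) + 4 * (2 ^ (k + 2) * (k + 2).factorial * ((k + 2) ^ 2 + 1) ^ (k + 1))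

lemma choose_top {n q k : ℕ} (hq : bigT k ≤ q) (hn : n ≤ ((k + 2) ^ 2 + 1) * q) :
    4 * n.choose (k + 1) ≤ q.choose (k + 2) := by
  have h1 : n.choose (k + 1) ≤ ((k + 2) ^ 2 + 1) ^ (k + 1) * q ^ (k + 1) := by
    rw [← mul_pow]
    exact (Nat.choose_le_pow n (k + 1)).trans (Nat.pow_le_pow_left hn _)
  have h2 : q ^ (k + 2) ≤ 2 ^ (k + 2) * (k + 2).factorial * q.choose (k + 2) := by
    have h4 : q ≤ 2 * (q + 1 - (k + 2)) := by unfold bigT at hq; omega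
    have h5 : (q + 1 - (k + 2)) ^ (k + 2) ≤ (k + 2).factorial * q.choose (k + 2) := by
      rw [← Nat.descFactorial_eq_factorial_mul_choose]
      exact Nat.pow_sub_le_descFactorial q (k + 2)
    calc q ^ (k + 2) ≤ (2 * (q + 1 - (k + 2))) ^ (k + 2) := Nat.pow_le_pow_left h4 _
      _ = 2 ^ (k + 2) * (q + 1 - (k + 2)) ^ (k + 2) := mul_pow _ _ _
      _ ≤ 2 ^ (k + 2) * ((k + 2).factorial * q.choose (k + 2)) := Nat.mul_le_mul_left _ h5
      _ = _ := by ring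
  have hpos : 0 < 2 ^ (k + 2) * (k + 2).factorial := by positivity
  refine Nat.le_of_mul_le_mul_left ?_ hpos
  refine le_trans ?_ h2
  calc 2 ^ (k + 2) * (k + 2).factorial * (4 * n.choose (k + 1))
      ≤ 2 ^ (k + 2) * (k + 2).factorial * (4 * (((k + 2) ^ 2 + 1) ^ (k + 1) * q ^ (k + 1))) := by
        gcongr
    _ = (4 * (2 ^ (k + 2) * (k + 2).factorial * ((k + 2) ^ 2 + 1) ^ (k + 1))) * q ^ (k + 1) := by
        ring
    _ ≤ q * q ^ (k + 1) := by
        refine Nat.mul_le_mul_right _ ?_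
        unfold bigT at hq; omega
    _ = q ^ (k + 2) := by ring

/-! ### Blocks and matchings -/

/-- The `i`-th block, of size `k + 2`: the `i`-th group of `k + 1` consecutive elements starting
from `p`, together with `N - i`. -/
def blk (k p N i : ℕ) : Finset ℕ :=
  Finset.Ico (p + (k + 1) * i) (p + (k + 1) * (i + 1)) ∪ {N - i}

/-- `F` contains `t` pairwise disjoint nonempty sets inside `R`. -/
def MatchIn (F : Finset (Finset ℕ)) (R : Finset ℕ) (t : ℕ) : Prop :=
  ∃ M ⊆ F, M.card = t ∧ (M : Set (Finset ℕ)).PairwiseDisjoint id ∧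
    ∀ A ∈ M, A ⊆ R ∧ A.Nonempty

lemma matchIn_insert_aux {M : Finset (Finset ℕ)} {R A : Finset ℕ}
    (hd : (M : Set (Finset ℕ)).PairwiseDisjoint id) (hR : ∀ B ∈ M, B ⊆ R ∧ B.Nonempty)
    (hA : Disjoint A R) :
    A ∉ M ∧ ((insert A M : Finset (Finset ℕ)) : Set (Finset ℕ)).PairwiseDisjoint id := by
  constructor
  · intro h
    obtain ⟨h1, x, hx⟩ := hR A h
    exact Finset.disjoint_left.1 hA hx (h1 hx)
  · rw [Finset.coe_insert]
    refine hd.insert ?_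
    intro B hB _
    exact hA.mono_right (hR B hB).1

lemma MatchIn.insert {F : Finset (Finset ℕ)} {R A : Finset ℕ} {t : ℕ} (h : MatchIn F R t)
    (hAF : A ∈ F) (hA : Disjoint A R) (hne : A.Nonempty) : MatchIn F (R ∪ A) (t + 1) := by
  obtain ⟨M, hMF, hc, hd, hR⟩ := h
  obtain ⟨h1, h2⟩ := matchIn_insert_aux hd hR hA
  refine ⟨Insert.insert A M, Finset.insert_subset hAF hMF, ?_, h2, ?_⟩
  · rw [Finset.card_insert_of_notMem h1, hc]
  · intro B hB
    rcases Finset.mem_insert.1 hB with rfl | hB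
    · exact ⟨Finset.subset_union_right, hne⟩
    · exact ⟨(hR B hB).1.trans Finset.subset_union_left, (hR B hB).2⟩

lemma MatchIn.hasMatching {F : Finset (Finset ℕ)} {R A : Finset ℕ} {t : ℕ} (h : MatchIn F R t)
    (hAF : A ∈ F) (hA : Disjoint A R) : HasMatching F (t + 1) := by
  obtain ⟨M, hMF, hc, hd, hR⟩ := h
  obtain ⟨h1, h2⟩ := matchIn_insert_aux hd hR hA
  refine ⟨Insert.insert A M, Finset.insert_subset hAF hMF, ?_, h2⟩
  rw [Finset.card_insert_of_notMem h1, hc]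

lemma blk_bound {k p N r i : ℕ} (hN : p + (k + 2) * r = N + 1) (hi : i < r) :
    p + (k + 1) * (i + 1) + i ≤ N := by
  have : (k + 2) * (i + 1) ≤ (k + 2) * r := Nat.mul_le_mul_left _ hi
  nlinarith

lemma matchIn_blk {F : Finset (Finset ℕ)} {k p N r : ℕ} (hN : p + (k + 2) * r = N + 1)
    (hF : ∀ i < r, blk k p N i ∈ F) : MatchIn F (Finset.Icc p N) r := by
  have hdis : ∀ i < r, ∀ j < r, i < j → Disjoint (blk k p N i) (blk k p N j) := by
    intro i hi j hj hij
    have h1 := blk_bound hN hi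
    have h2 := blk_bound hN hj
    -- The consecutive groups stay below `N - j` for every `j < r`.
    have h3 : p + (k + 1) * (i + 1) ≤ p + (k + 1) * j := by
      have := Nat.mul_le_mul_left (k + 1) (Nat.succ_le_of_lt hij)
      simpa using this
    have h4 : p + (k + 1) * j ≤ p + (k + 1) * (j + 1) := by
      exact Nat.add_le_add_left (Nat.mul_le_mul_left _ (Nat.le_succ j)) _
    rw [Finset.disjoint_left]
    intro x hx hy
    simp only [blk, Finset.mem_union, Finset.mem_Ico, Finset.mem_singleton] at hx hy
    omega
  have hne : ∀ i, (blk k p N i).Nonempty := fun i => ⟨N - i, by simp [blk]⟩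
  have hdis' : ∀ i < r, ∀ j < r, i ≠ j → Disjoint (blk k p N i) (blk k p N j) := by
    intro i hi j hj hij
    rcases lt_or_gt_of_ne hij with h | h
    · exact hdis i hi j hj h
    · exact (hdis j hj i hi h).symm
  refine ⟨(Finset.range r).image (blk k p N), ?_, ?_, ?_, ?_⟩
  · intro A hA
    obtain ⟨i, hi, rfl⟩ := Finset.mem_image.1 hA
    exact hF i (Finset.mem_range.1 hi)
  · rw [Finset.card_image_of_injOn, Finset.card_range]
    intro i hi j hj hij
    by_contra hne'
    have := hdis' i (by simpa using hi) j (by simpa using hj) hne'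
    rw [hij, disjoint_self] at this
    exact (hne j).ne_empty this
  · intro A hA B hB hAB
    simp only [Finset.coe_image, Set.mem_image, Finset.mem_coe, Finset.mem_range] at hA hB
    obtain ⟨i, hi, rfl⟩ := hA
    obtain ⟨j, hj, rfl⟩ := hB
    exact hdis' i hi j hj (fun h => hAB (by rw [h]))
  · intro A hA
    obtain ⟨i, hi, rfl⟩ := Finset.mem_image.1 hA
    refine ⟨?_, hne i⟩
    have h1 := blk_bound hN (Finset.mem_range.1 hi)
    intro x hx
    simp only [blk, Finset.mem_union, Finset.mem_Ico, Finset.mem_singleton] at hx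
    simp only [Finset.mem_Icc]
    have h5 : p ≤ p + (k + 1) * (i + 1) := Nat.le_add_right _ _
    have h6 : p ≤ p + (k + 1) * i := Nat.le_add_right _ _
    omega

/-- If fewer than `4·C(n, m-1) - O(C(n, m-2))` of the `m`-sets are missing, `m = k + 2`, then `F`
contains every block of the partition of `{p, …, n-3}`, for any starting point `p ≤ 2m-1`. -/
lemma blk_mem {k s p r i : ℕ} {F : Finset (Finset ℕ)} (hF : IsShifted F)
    (hs : 8 * (k + 2) ^ 2 + (k + 2) * bigT k ≤ s) (hp1 : 1 ≤ p) (hp : p ≤ 2 * k + 3)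
    (hN : p + (k + 2) * r = (k + 2) * s + 1 - 3 + 1) (hi : i < r)
    (hy : yF ((k + 2) * s + 1) F (k + 2)
        + 4 * (3 * (k + 2) + 1) * ((k + 2) * s + 1).choose k
      < 4 * ((k + 2) * s + 1).choose (k + 1)) :
    blk k p ((k + 2) * s + 1 - 3) i ∈ F := by
  by_contra hm
  set n := (k + 2) * s + 1 with hn
  have hb := blk_bound (k := k) (N := n - 3) hN hi
  have hgroup : p + (k + 1) * i + (k + 1) = p + (k + 1) * (i + 1) := by ring
  by_cases his : (k + 2) * i ≤ s
  · have h1 := yF_ge_single (n := n) (k := k) (w := p + (k + 1) * (i + 1) - 1) (e := n - 3 - i) hF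
      (X := Finset.Ico (p + (k + 1) * i) (p + (k + 1) * (i + 1)))
      (by intro x hx; rw [Finset.mem_Ico] at hx; omega)
      (by rw [Nat.card_Ico]; omega) (by omega) hm
    have h2 : n + 1 - (n - 3 - i) = i + 4 := by omega
    rw [h2] at h1
    have h3 : n - ((k + 2) * i + (3 * (k + 2) + 1))
        ≤ n - 3 - i - 1 - (p + (k + 1) * (i + 1) - 1) := by
      have e1 : (k + 2) * i = (k + 1) * i + i := by ring
      omega
    have h4 : (i + 4) * (n - ((k + 2) * i + (3 * (k + 2) + 1))).choose (k + 1)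
        ≤ yF n F (k + 2) :=
      (Nat.mul_le_mul_left _ (Nat.choose_le_choose _ h3)).trans h1
    have h5 := choose_block (n := n) (m := k + 2) (c := 3 * (k + 2) + 1) (i := i) (k := k) (by
      have a1 := Nat.mul_le_mul_left (k + 1) his
      have a2 : 8 * (k + 2) ^ 2 ≤ s := le_trans (Nat.le_add_right _ _) hs
      rw [hn]
      nlinarith)
    omega
  · push Not at his
    have h1 := yF_ge_top (n := n) (k := k + 2) (e := n - 3 - i) hF
      (B := blk k p (n - 3) i)
      (by
        intro x hx
        simp only [blk, Finset.mem_union, Finset.mem_Ico, Finset.mem_singleton] at hx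
        omega)
      (by
        unfold blk
        rw [Finset.card_union_of_disjoint, Nat.card_Ico]
        · simp; omega
        · simp; omega)
      (by omega) hm
    have h2 : n + 1 - (n - 3 - i) = i + 4 := by omega
    rw [h2] at h1
    have h3 := choose_top (n := n) (q := i + 4) (k := k) (by
        have : (k + 2) * bigT k ≤ (k + 2) * i := by omega
        have := Nat.le_of_mul_le_mul_left this (by omega)
        omega) (by
        have := Nat.mul_le_mul_left (k + 2) his.le
        rw [hn]
        nlinarith)
    omega

theorem stmt_10 (m : ℕ) (hm : 2 ≤ m) :
    ∃ K s0 : ℕ, ∀ s : ℕ, s0 ≤ s →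
      ∀ F : Finset (Finset ℕ), F ⊆ (ground (m * s + 1)).powerset →
        IsShifted F → ¬ HasMatching F s →
        ¬ F ⊆ Qfam m s 1 → ¬ F ⊆ Wfam m s 1 →
          4 * (m * s + 1).choose (m - 1) ≤
            yF (m * s + 1) F m + yF (m * s + 1) F (m + 1) + K * s ^ (m - 2) := by
  obtain ⟨k, rfl⟩ : ∃ k, m = k + 2 := ⟨m - 2, by omega⟩
  refine ⟨4 * (3 * (k + 2) + 1) * (k + 3) ^ k, 8 * (k + 2) ^ 2 + (k + 2) * bigT k, ?_⟩
  intro s hs F hFn hF hmat hQ hW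
  have e1 : k + 2 - 1 = k + 1 := by omega
  have e2 : k + 2 - 2 = k := by omega
  rw [e1, e2]
  have hs8 : 8 * (k + 2) ^ 2 ≤ s := le_trans (Nat.le_add_right _ _) hs
  have hsk : 16 * (k + 2) ≤ s := by nlinarith
  by_contra! hlt
  -- It suffices to contradict the bound with `s ^ k` replaced by the binomial coefficient.
  have hy : yF ((k + 2) * s + 1) F (k + 2) + yF ((k + 2) * s + 1) F (k + 3)
        + 4 * (3 * (k + 2) + 1) * ((k + 2) * s + 1).choose k
      < 4 * ((k + 2) * s + 1).choose (k + 1) := by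
    have h1 : ((k + 2) * s + 1).choose k ≤ (k + 3) ^ k * s ^ k := by
      rw [← mul_pow]
      refine (Nat.choose_le_pow _ k).trans (Nat.pow_le_pow_left ?_ _)
      nlinarith
    have h2 := Nat.mul_le_mul_left (4 * (3 * (k + 2) + 1)) h1
    rw [← mul_assoc] at h2
    have e3 : k + 2 + 1 = k + 3 := rfl
    rw [e3] at hlt
    omega
  have hblk : ∀ p r i, 1 ≤ p → p ≤ 2 * k + 3 →
      p + (k + 2) * r = (k + 2) * s + 1 - 3 + 1 → i < r →
      blk k p ((k + 2) * s + 1 - 3) i ∈ F := by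
    intro p r i h1 h2 h3 h4
    exact blk_mem hF hs h1 h2 h3 h4 (by omega)
  have hns : (k + 2) * s = (k + 2) * (s - 2) + 2 * (k + 2) := by
    obtain ⟨t, rfl⟩ : ∃ t, s = t + 2 := ⟨s - 2, by omega⟩
    rw [Nat.add_sub_cancel]; ring
  have hns1 : (k + 2) * s = (k + 2) * (s - 1) + (k + 2) := by
    obtain ⟨t, rfl⟩ : ∃ t, s = t + 1 := ⟨s - 1, by omega⟩
    rw [Nat.add_sub_cancel]; ring
  have hbig : 16 * (k + 2) ≤ (k + 2) * s := by nlinarith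
  set n := (k + 2) * s + 1 with hn
  have hF0 : ∀ P ∈ F, ∀ x ∈ P, 1 ≤ x ∧ x ≤ n := by
    intro P hP x hx
    have := Finset.mem_powerset.1 (hFn hP) hx
    simpa [ground] using this
  -- No member of `F` avoids the interval from `m - 1` to `n - 3`.
  have hno1 : ∀ A ∈ F, ¬ Disjoint A (Finset.Icc (k + 1) (n - 3)) := by
    intro A hA hd
    have hM := matchIn_blk (F := F) (k := k) (p := k + 1) (N := n - 3) (r := s - 1) (by omega)
      (fun i hi => hblk (k + 1) (s - 1) i (by omega) (by omega) (by omega) hi)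
    have := hM.hasMatching hA hd
    rw [show s - 1 + 1 = s by omega] at this
    exact hmat this
  have hno2 : ∀ E E' : Finset ℕ, (∀ x ∈ E, n - 2 ≤ x) → (∀ x ∈ E', n - 2 ≤ x) → Disjoint E E' →
      Finset.Icc 1 (k + 1) ∪ E ∈ F → Finset.Ico (k + 2) (2 * k + 3) ∪ E' ∈ F → False := by
    intro E E' hE hE' hEE hA hB
    have hM := matchIn_blk (F := F) (k := k) (p := 2 * k + 3) (N := n - 3) (r := s - 2) (by omega)
      (fun i hi => hblk (2 * k + 3) (s - 2) i (by omega) (by omega) (by omega) hi)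
    have hM2 := hM.insert hB (by
      rw [Finset.disjoint_left]
      intro x hx hx'
      simp only [Finset.mem_union, Finset.mem_Ico, Finset.mem_Icc] at hx hx'
      rcases hx with hx | hx
      · omega
      · have := hE' x hx; omega) ⟨k + 2, by simp; omega⟩
    have := hM2.hasMatching hA (by
      rw [Finset.disjoint_left]
      intro x hx hx'
      simp only [Finset.mem_union, Finset.mem_Ico, Finset.mem_Icc] at hx hx'
      rcases hx with hx | hx
      · rcases hx' with hx' | hx' | hx'
        · omega
        · omega
        · have := hE' x hx'; omega
      · have h1 := hE x hx
        rcases hx' with hx' | hx' | hx'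
        · omega
        · omega
        · exact Finset.disjoint_left.1 hEE hx hx')
    rw [show s - 2 + 1 + 1 = s by omega] at this
    exact hmat this
  -- Members of size at most `m - 1` shift to initial segments.
  have hsmall : ∀ P ∈ F, P.card ≤ k + 1 → Finset.Icc 1 (k + 1) ∈ F := by
    intro P hP hc
    have h0 : 0 ∉ P := fun h => by have := hF0 P hP 0 h; omega
    have h1 := hF.mem_init (E := ∅) (E' := ∅) (k := P.card) hP h0 (by simp) (Below.refl _) rfl
      (by simp) (by simp)
    rw [Finset.union_empty] at h1
    rcases Nat.lt_or_ge P.card (k + 1) with h | h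
    · exfalso
      refine hno1 _ h1 ?_
      rw [Finset.disjoint_left]
      intro x hx hx'
      simp only [Finset.mem_Icc] at hx hx'
      omega
    · rwa [show P.card = k + 1 by omega] at h1
  -- A member outside `Q` excludes `X ∪ {n - 1, n}`.
  have hA : Finset.Ico (k + 2) (2 * k + 3) ∪ {n - 1, n} ∉ F := by
    intro hX
    obtain ⟨P, hP, hPQ⟩ := Finset.not_subset.1 hQ
    have h0 : 0 ∉ P := fun h => by have := hF0 P hP 0 h; omega
    have hPQ' : P.card + (P ∩ Finset.Icc 1 (n - 3)).card < 2 * (k + 2) := by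
      by_contra! hcon
      apply hPQ
      simp only [Qfam, Finset.mem_filter]
      refine ⟨hFn hP, ?_⟩
      have : (k + 2) * s - 1 - 1 = n - 3 := by omega
      rw [this]
      exact hcon
    have hsplit : (P ∩ Finset.Icc 1 (n - 3)).card + (P \ Finset.Icc 1 (n - 3)).card = P.card :=
      Finset.card_inter_add_card_sdiff _ _
    have hsub : P \ Finset.Icc 1 (n - 3) ⊆ {n - 2, n - 1, n} := by
      intro x hx
      simp only [Finset.mem_sdiff, Finset.mem_Icc] at hx
      have := hF0 P hP x hx.1
      simp only [Finset.mem_insert, Finset.mem_singleton]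
      omega
    have hc3 : ({n - 2, n - 1, n} : Finset ℕ).card = 3 := by
      rw [Finset.card_eq_three]
      exact ⟨n - 2, n - 1, n, by omega, by omega, by omega, rfl⟩
    have hle : (P \ Finset.Icc 1 (n - 3)).card ≤ 3 := (Finset.card_le_card hsub).trans hc3.le
    rcases Nat.lt_or_ge P.card (k + 2) with h | h
    · refine hno2 ∅ {n - 1, n} (by simp) (by simp; omega) (by simp) ?_ hX
      rw [Finset.union_empty]
      exact hsmall P hP (by omega)
    · rcases Nat.lt_or_ge (k + 2) P.card with h' | h'
      · have heq : P \ Finset.Icc 1 (n - 3) = {n - 2, n - 1, n} :=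
          Finset.eq_of_subset_of_card_le hsub (by omega)
        have h1 := hF.mem_init (E := {n - 2, n - 1, n}) (E' := {n - 2, n - 1, n}) (k := k) hP h0
          (heq ▸ Finset.sdiff_subset) (Below.refl _) rfl (by omega) (by simp; omega)
        refine hno1 _ h1 ?_
        rw [Finset.disjoint_left]
        intro x hx hx'
        simp only [Finset.mem_union, Finset.mem_insert, Finset.mem_singleton,
          Finset.mem_Icc] at hx hx'
        omega
      · have hpos : 0 < (P \ Finset.Icc 1 (n - 3)).card := by omega
        obtain ⟨e, he⟩ := Finset.card_pos.1 hpos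
        have he2 := hsub he
        simp only [Finset.mem_insert, Finset.mem_singleton] at he2
        have heP := (Finset.mem_sdiff.1 he).1
        have h1 := hF.mem_init (E := {e}) (E' := {n - 2}) (k := k + 1) hP h0
          (by simpa using heP) (below_of_le (by simp) (by simp; omega)) (by simp)
          (by simp; omega) (by simp; omega)
        exact hno2 {n - 2} {n - 1, n} (fun x hx => (Finset.mem_singleton.1 hx).ge) (by simp; omega) (by simp; omega) h1 hX
  -- A member outside `W` excludes `X ∪ {n - 2}`.
  have hB : Finset.Ico (k + 2) (2 * k + 3) ∪ {n - 2} ∉ F := by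
    intro hX
    obtain ⟨P, hP, hPW⟩ := Finset.not_subset.1 hW
    have h0 : 0 ∉ P := fun h => by have := hF0 P hP 0 h; omega
    have hPW' : (P ∩ Finset.Icc 1 (n - 2)).card < k + 2 := by
      by_contra! hcon
      apply hPW
      simp only [Wfam, Finset.mem_filter]
      refine ⟨hFn hP, ?_⟩
      have : (k + 2) * s - 1 = n - 2 := by omega
      rw [this]
      exact hcon
    have hsplit : (P ∩ Finset.Icc 1 (n - 2)).card + (P \ Finset.Icc 1 (n - 2)).card = P.card :=
      Finset.card_inter_add_card_sdiff _ _
    have hsub : P \ Finset.Icc 1 (n - 2) ⊆ {n - 1, n} := by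
      intro x hx
      simp only [Finset.mem_sdiff, Finset.mem_Icc] at hx
      have := hF0 P hP x hx.1
      simp only [Finset.mem_insert, Finset.mem_singleton]
      omega
    have hc2 : ({n - 1, n} : Finset ℕ).card = 2 := Finset.card_pair (by omega)
    have hle : (P \ Finset.Icc 1 (n - 2)).card ≤ 2 := (Finset.card_le_card hsub).trans hc2.le
    rcases Nat.lt_or_ge P.card (k + 2) with h | h
    · refine hno2 ∅ {n - 2} (by simp) (fun x hx => (Finset.mem_singleton.1 hx).ge) (by simp) ?_ hX
      rw [Finset.union_empty]
      exact hsmall P hP (by omega)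
    · rcases Nat.lt_or_ge (k + 2) P.card with h' | h'
      · have heq : P \ Finset.Icc 1 (n - 2) = {n - 1, n} :=
          Finset.eq_of_subset_of_card_le hsub (by omega)
        have h1 := hF.mem_init (E := {n - 1, n}) (E' := {n - 1, n}) (k := k + 1) hP h0
          (heq ▸ Finset.sdiff_subset) (Below.refl _) rfl (by omega) (by simp; omega)
        exact hno2 {n - 1, n} {n - 2} (by simp; omega)
          (fun x hx => (Finset.mem_singleton.1 hx).ge) (by simp; omega) h1 hX
      · have hpos : 0 < (P \ Finset.Icc 1 (n - 2)).card := by omega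
        obtain ⟨e, he⟩ := Finset.card_pos.1 hpos
        have he2 := hsub he
        simp only [Finset.mem_insert, Finset.mem_singleton] at he2
        have heP := (Finset.mem_sdiff.1 he).1
        have h1 := hF.mem_init (E := {e}) (E' := {n - 1}) (k := k + 1) hP h0
          (by simpa using heP) (below_of_le (by simp) (by simp; omega)) (by simp)
          (by simp; omega) (by simp; omega)
        exact hno2 {n - 1} {n - 2} (by simp; omega)
          (fun x hx => (Finset.mem_singleton.1 hx).ge) (by simp; omega) h1 hX
  have c1 := yF_ge_single (n := n) (k := k) (w := 2 * k + 2) (e := n - 2) hF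
    (X := Finset.Ico (k + 2) (2 * k + 3))
    (by intro x hx; rw [Finset.mem_Ico] at hx; omega)
    (by rw [Nat.card_Ico]; omega) (by omega) hB
  have c2 := yF_ge_pair (n := n) (k := k) (w := 2 * k + 2) hF
    (X := Finset.Ico (k + 2) (2 * k + 3))
    (by intro x hx; rw [Finset.mem_Ico] at hx; omega)
    (by rw [Nat.card_Ico]; omega) (by omega) hA
  rw [show n + 1 - (n - 2) = 3 by omega] at c1
  have c3 := choose_sub_ge n (3 * (k + 2) + 1) k
  have c4 : (n - (3 * (k + 2) + 1)).choose (k + 1) ≤ (n - 2 - 1 - (2 * k + 2)).choose (k + 1) :=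
    Nat.choose_le_choose _ (by omega)
  have c5 : 4 * (3 * (k + 2) + 1) * n.choose k = 4 * ((3 * (k + 2) + 1) * n.choose k) := by ring
  omega
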